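/- Formal homotopy of morphisms of interaction spaces is not transitive: there exist interaction spaces (X,{X_1,X_2}) with X_1, X_2 disjoint single points, (Y,{Y_1,Y_2}) with Y_1=Y_2 the unit disk, and morphisms f, g, h such that f is formally homotopic to h and h is formally homotopic to g, but f is not formally homotopic to g. -/

import Mathlib

open scoped unitInterval

universe u

/-- An `n`-interaction space: a topological space `X` together with a covering
by `n` subspaces. -/
structure InterSp (n : ℕ) : Type (u + 1) where
  X : Type u
  [top : TopologicalSpace X]
  C : Fin n → Set X
  covers : (⋃ i, C i) = Set.univ

attribute [instance] InterSp.top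

namespace InterSp

variable {n : ℕ}

/-- A morphism of `n`-interaction spaces: a family of continuous maps
`f i : X i → Y i` such that, for `i ≠ j`, `f i u = f j v` iff `u = v`
(as points of the ambient space). -/
structure Mor (A B : InterSp n) where
  f : ∀ i, C(A.C i, B.C i)
  cond : ∀ i j, i ≠ j → ∀ (u : A.C i) (v : A.C j),
    ((f i u : B.X) = ((f j v : B.C j) : B.X)) ↔ ((u : A.X) = ((v : A.C j) : A.X))

/-- A formal homotopy between two morphisms of interaction spaces: a morphism of
interaction spaces `(X × I, {Xᵢ × I}) → (Y, {Yᵢ})` restricting to `f` at `0` and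
`g` at `1`. -/
structure FHtpy {A B : InterSp n} (f g : Mor A B) where
  H : ∀ i, C((A.C i) × I, B.C i)
  cond : ∀ i j, i ≠ j → ∀ (u : A.C i) (v : A.C j) (s t : I),
    ((H i (u, s) : B.X) = ((H j (v, t) : B.C j) : B.X)) ↔ ((u : A.X) = ((v : A.C j) : A.X))
  h0 : ∀ i u, H i (u, 0) = f.f i u
  h1 : ∀ i u, H i (u, 1) = g.f i u

/-- `f` and `g` are formally homotopic. -/
def FHomotopic {A B : InterSp n} (f g : Mor A B) : Prop := Nonempty (FHtpy f g)

/-- `f` and `g` are homotopic: connected by a finite chain of formal homotopies. -/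
def Homotopic {A B : InterSp n} (f g : Mor A B) : Prop :=
  Relation.ReflTransGen FHomotopic f g

end InterSp

/-!
Two particles live in a space with three points `a`, `b`, `c`. Moving the second one from `b` to `c`
while the first rests at `a`, and then the first one from `a` to `b` while the second rests at `c`,
gives formal homotopies `(a, b) ≃ (a, c) ≃ (b, c)`. A formal homotopy, however, keeps the full
trajectories of the two particles apart, not just their positions at equal times, so `(a, b)` and
`(b, c)` are not formally homotopic: both trajectories would pass through `b`.
In a convex set, straight paths do: take `b` to be the midpoint of `a` and `c`.
-/

open Function Set Topology

theorem pairwise_disjoint_fin_two {α : Type*} [PartialOrder α] [OrderBot α] {s : Fin 2 → α} :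
    Pairwise (Disjoint on s) ↔ Disjoint (s 0) (s 1) := by
  simp [Pairwise, Fin.forall_fin_two, onFun, disjoint_comm]

namespace InterSp

variable {n : ℕ} {A B : InterSp n}

/-- The morphism that is constant with value `p i` on the `i`-th piece, for a source with pairwise
disjoint pieces and pairwise distinct values `p i`. -/
def Mor.const (hA : Pairwise (Disjoint on A.C)) (p : Fin n → B.X) (hp : ∀ i, p i ∈ B.C i)
    (hp_inj : Injective p) : Mor A B where
  f i := .const _ ⟨p i, hp i⟩
  cond _ _ hij u v := iff_of_false (hp_inj.ne hij) ((hA hij).ne_of_mem u.2 v.2)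

theorem fHomotopic_const_of_joinedIn {hA : Pairwise (Disjoint on A.C)} {p q : Fin n → B.X}
    {hp : ∀ i, p i ∈ B.C i} {hq : ∀ i, q i ∈ B.C i} {hp_inj : Injective p} {hq_inj : Injective q}
    {S : Fin n → Set B.X} (hS : Pairwise (Disjoint on S)) (hSB : ∀ i, S i ⊆ B.C i)
    (hpq : ∀ i, JoinedIn (S i) (p i) (q i)) :
    FHomotopic (Mor.const hA p hp hp_inj) (Mor.const hA q hq hq_inj) :=
  ⟨{ H i := ⟨fun x ↦ ⟨(hpq i).somePath x.2, hSB i ((hpq i).somePath_mem x.2)⟩, by fun_prop⟩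
     cond i j hij u v s t := iff_of_false
       ((hS hij).ne_of_mem ((hpq i).somePath_mem s) ((hpq j).somePath_mem t))
       ((hA hij).ne_of_mem u.2 v.2)
     h0 i _ := Subtype.ext (hpq i).somePath.source
     h1 i _ := Subtype.ext (hpq i).somePath.target }⟩

theorem FHomotopic.apply_eq_apply_iff {f g : Mor A B} (h : FHomotopic f g) {i j : Fin n}
    (hij : i ≠ j) (u : A.C i) (v : A.C j) :
    (f.f i u : B.X) = (g.f j v : B.X) ↔ (u : A.X) = (v : A.X) := by
  obtain ⟨F⟩ := h
  rw [← F.h0, ← F.h1]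
  exact F.cond i j hij u v 0 1

/-- The space of `n` discrete points, each of which is one of the pieces. -/
def points (n : ℕ) : InterSp.{u} n where
  X := ULift (Fin n)
  C i := {⟨i⟩}
  covers := by ext ⟨i⟩; simp

theorem pairwise_disjoint_points (n : ℕ) : Pairwise (Disjoint on (points.{u} n).C) :=
  fun _ _ hij ↦ disjoint_singleton.2 (ULift.up_injective.ne hij)

/-- The interaction space over `Y` all of whose `n` pieces are equal to `Y`. -/
def whole (n : ℕ) [NeZero n] (Y : Type u) [TopologicalSpace Y] : InterSp n where
  X := Y
  C _ := univ
  covers := iUnion_const _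

end InterSp

section Convex

variable {Y E : Type*} [TopologicalSpace Y] [AddCommGroup E] [Module ℝ E]

theorem right_notMem_segment_midpoint {x y : E} (hxy : x ≠ y) :
    y ∉ segment ℝ x (midpoint ℝ x y) := by
  rw [segment_eq_image_lineMap]
  rintro ⟨t, ⟨-, ht⟩, h⟩
  rw [midpoint, AffineMap.lineMap_lineMap_right, AffineMap.lineMap_eq_right_iff] at h
  have ht_half : t * ⅟2 = 1 := h.resolve_left hxy
  norm_num at ht_half
  linarith

variable [TopologicalSpace E] [ContinuousAdd E] [ContinuousSMul ℝ E] {e : Y → E}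

theorem joinedIn_compl_singleton_of_isEmbedding (he : IsEmbedding e)
    (hconv : Convex ℝ (range e)) {a b c : Y} (hc : e c ∉ segment ℝ (e a) (e b)) :
    JoinedIn {c}ᶜ a b := by
  have ha : a ≠ c := fun h ↦ hc (h ▸ left_mem_segment ℝ _ _)
  have hb : b ≠ c := fun h ↦ hc (h ▸ right_mem_segment ℝ _ _)
  refine (he.isInducing.joinedIn_image ha hb).1 (.of_segment_subset ?_)
  rw [image_compl_eq_range_sdiff_image he.injective, image_singleton]
  exact subset_sdiff_singleton (hconv.segment_subset (mem_range_self a) (mem_range_self b)) hc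

theorem exists_joinedIn_compl_singleton_of_convex {K : Set E} (hK : Convex ℝ K)
    (hK_nt : K.Nontrivial) :
    ∃ a b c : ULift.{u} K, JoinedIn {c}ᶜ a b ∧ JoinedIn {a}ᶜ b c := by
  let e : ULift.{u} K → E := Subtype.val ∘ ULift.down
  have he : IsEmbedding e := IsEmbedding.subtypeVal.comp .uliftDown
  have he_conv : Convex ℝ (range e) := by
    rwa [ULift.down_surjective.range_comp, Subtype.range_val]
  obtain ⟨x, hx, y, hy, hxy⟩ := hK_nt
  refine ⟨⟨x, hx⟩, ⟨midpoint ℝ x y, hK.midpoint_mem hx hy⟩, ⟨y, hy⟩, ?_, .symm ?_⟩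
  · exact joinedIn_compl_singleton_of_isEmbedding he he_conv (right_notMem_segment_midpoint hxy)
  · refine joinedIn_compl_singleton_of_isEmbedding he he_conv ?_
    change x ∉ segment ℝ y (midpoint ℝ x y)
    rw [midpoint_comm]
    exact right_notMem_segment_midpoint hxy.symm

end Convex

theorem stmt2_general {A B : InterSp 2} (hA : Pairwise (Disjoint on A.C))
    (hA_ne : ∀ i, (A.C i).Nonempty) {a b c : B.X}
    (hab : JoinedIn (B.C 0 \ {c}) a b) (hbc : JoinedIn (B.C 1 \ {a}) b c) :
    ∃ f g h : InterSp.Mor A B,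
      InterSp.FHomotopic f h ∧ InterSp.FHomotopic h g ∧ ¬ InterSp.FHomotopic f g := by
  obtain ⟨⟨ha0, hac⟩, hb0, hbc'⟩ := hab.mem
  obtain ⟨⟨hb1, hba⟩, hc1, -⟩ := hbc.mem
  let const (x y : B.X) (hx : x ∈ B.C 0) (hy : y ∈ B.C 1) (hxy : x ≠ y) : InterSp.Mor A B :=
    .const hA ![x, y] (Fin.forall_fin_two.2 ⟨hx, hy⟩) (injective_pair_iff_ne.2 hxy)
  refine ⟨const a b ha0 hb1 (Ne.symm hba), const b c hb0 hc1 hbc', const a c ha0 hc1 hac,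
    ?_, ?_, ?_⟩
  · exact InterSp.fHomotopic_const_of_joinedIn (S := ![{a}, B.C 1 \ {a}])
      (pairwise_disjoint_fin_two.2 disjoint_sdiff_right)
      (Fin.forall_fin_two.2 ⟨singleton_subset_iff.2 ha0, sdiff_subset⟩)
      (Fin.forall_fin_two.2 ⟨.refl rfl, hbc⟩)
  · exact InterSp.fHomotopic_const_of_joinedIn (S := ![B.C 0 \ {c}, {c}])
      (pairwise_disjoint_fin_two.2 disjoint_sdiff_left)
      (Fin.forall_fin_two.2 ⟨sdiff_subset, singleton_subset_iff.2 hc1⟩)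
      (Fin.forall_fin_two.2 ⟨hab, .refl rfl⟩)
  · intro hfg
    obtain ⟨u, hu⟩ := hA_ne 0
    obtain ⟨v, hv⟩ := hA_ne 1
    have huv : v = u := (hfg.apply_eq_apply_iff one_ne_zero ⟨v, hv⟩ ⟨u, hu⟩).1 rfl
    exact (hA zero_ne_one).ne_of_mem hu hv huv.symm

/-- formal homotopy is not transitive.  There are interaction
spaces `(X, {X₁, X₂})` with `X₁, X₂` disjoint single points and `(Y, {Y₁, Y₂})`
with `Y₁ = Y₂` the unit disk, and morphisms `f, g, h` with `f` formally
homotopic to `h` and `h` formally homotopic to `g`, while `f` is not formally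
homotopic to `g`. -/
theorem stmt2 :
    ∃ (A B : InterSp 2),
      (∃ p q : A.X, p ≠ q ∧ A.C 0 = {p} ∧ A.C 1 = {q}) ∧
      (Nonempty (B.X ≃ₜ ↥(Metric.closedBall (0 : ℂ) 1)) ∧
        B.C 0 = Set.univ ∧ B.C 1 = Set.univ) ∧
      ∃ f g h : InterSp.Mor A B,
        InterSp.FHomotopic f h ∧ InterSp.FHomotopic h g ∧ ¬ InterSp.FHomotopic f g := by
  obtain ⟨a, b, c, hab, hbc⟩ := exists_joinedIn_compl_singleton_of_convex
    (convex_closedBall (0 : ℂ) 1) ⟨0, by simp, 1, by simp, zero_ne_one⟩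
  rw [compl_eq_univ_sdiff] at hab hbc
  exact ⟨.points 2, .whole 2 _, ⟨⟨0⟩, ⟨1⟩, ULift.up_injective.ne zero_ne_one, rfl, rfl⟩,
    ⟨⟨Homeomorph.ulift⟩, rfl, rfl⟩,
    stmt2_general (InterSp.pairwise_disjoint_points 2) (fun _ ↦ singleton_nonempty _) hab hbc⟩
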